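/- Let S be a finite state set with at least two elements, M a message set, ψ : M → S a bijection, and ℓ : S → ℝ with ℓ(s) < 0 for all s. Fix a state s̄ ∈ S, let m̄ := ψ⁻¹(s̄), and let m_∅ ∈ M with m_∅ ≠ m̄. Let G be the single-disclosure communication graph on states S and message-actions {m̄, m_∅} whose edge relation is E = { (s, m_∅) : s ∈ S } ∪ { (s̄, m̄) }. Then the lying-aversion modification v_LA satisfies strong graph-monotonicity on G; in particular v_LA is G-monotone. (One direction of the proposition characterizing lying-aversion-stabilized communication graphs: single-disclosure graphs.) -/

import Mathlib

open Finset

/-- A path on a communication graph with edge relation `E`. -/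
def IsCommPath {S P : Type*} (E : S → P → Prop) {N : ℕ}
    (s : Fin (N + 1) → S) (p : Fin (N + 1) → P) : Prop :=
  Function.Injective s ∧ Function.Injective p ∧
    (∀ i, E (s i) (p i)) ∧ ∀ i : Fin N, E (s i.succ) (p i.castSucc)

/-- `v` is G-monotone. -/
def GMonotone {S P : Type*} (E : S → P → Prop) (v : P × S → ℝ) : Prop :=
  ∀ N : ℕ, 1 ≤ N → ∀ (s : Fin (N + 1) → S) (p : Fin (N + 1) → P),
    IsCommPath E s p →
    0 < ∑ i : Fin (N + 1), (v (p i, s i) - v (p (i - 1), s i))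

/-- `v` satisfies strong graph-monotonicity (SGM) on the communication graph `E`. -/
def SGMonotone {S P : Type*} (E : S → P → Prop) (v : P × S → ℝ) : Prop :=
  ∀ N : ℕ, 1 ≤ N → ∀ (s : Fin (N + 1) → S) (p : Fin (N + 1) → P),
    IsCommPath E s p →
    (v (p 0, s 0) - v (p (Fin.last N), s 0) ≥ v (p 0, s 1) - v (p (Fin.last N), s 1)) ∧
    (N = 1 → v (p 0, s 0) - v (p (Fin.last N), s 0) > v (p 0, s 1) - v (p (Fin.last N), s 1))

/-- The lying-aversion modification. -/
def vLA {M S : Type*} [DecidableEq S] (ψ : M ≃ S) (ℓ : S → ℝ) : M × S → ℝ :=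
  fun q => if ψ q.1 = q.2 then 0 else ℓ q.2

/-- The single-disclosure edge relation: every state sends `m∅`, and the distinguished
state `s̄` also sends the truthful message `m̄ = ψ⁻¹ s̄`. -/
def singleDisclosureE {S M : Type*} (ψ : M ≃ S) (sbar : S) (mempty : M) :
    S → M → Prop :=
  fun s m => m = mempty ∨ (s = sbar ∧ m = ψ.symm sbar)

/-!
Strong graph-monotonicity always implies G-monotonicity: deleting the first pair `(s₀, p₀)` of a
path changes the cyclic sum by `v(p₀, s₀) - v(p_N, s₀) - (v(p₀, s₁) - v(p_N, s₁)) ≥ 0`, so by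
induction on `N` it suffices to treat `N = 1`, where the sum is this very difference.

On the single-disclosure graph, each message of a path except the last is shared by two states,
so it is `m∅`; as messages do not repeat, a path of positive length is `(s₀, m∅, s̄, m̄)`. The
difference above is then `-ℓ(s̄) - ℓ(s₀)` if `m∅` is truthful at `s₀`, and `-ℓ(s̄)` otherwise.
-/

section CyclicGain

variable {S P : Type*} {N : ℕ}

/-- The cyclic sum `∑ i, (v(pᵢ, sᵢ) - v(pᵢ₋₁, sᵢ))` of G-monotonicity. The convention `p₋₁ = p_N`
is built into the subtraction of `Fin (N + 1)`, which wraps around. -/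
def cyclicGain (v : P × S → ℝ) (s : Fin (N + 1) → S) (p : Fin (N + 1) → P) : ℝ :=
  ∑ i : Fin (N + 1), (v (p i, s i) - v (p (i - 1), s i))

lemma cyclicGain_eq_add_sum (v : P × S → ℝ) (s : Fin (N + 1) → S) (p : Fin (N + 1) → P) :
    cyclicGain v s p = v (p 0, s 0) - v (p (Fin.last N), s 0) +
      ∑ i : Fin N, (v (p i.succ, s i.succ) - v (p i.castSucc, s i.succ)) := by
  have zero_sub_one : (0 : Fin (N + 1)) - 1 = Fin.last N := by
    rw [sub_eq_iff_eq_add, Fin.last_add_one]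
  have succ_sub_one (i : Fin N) : i.succ - 1 = i.castSucc := by
    rw [sub_eq_iff_eq_add, Fin.coeSucc_eq_succ]
  simp only [cyclicGain, Fin.sum_univ_succ, zero_sub_one, succ_sub_one]

lemma cyclicGain_eq_add_cyclicGain_tail (v : P × S → ℝ)
    (s : Fin (N + 2) → S) (p : Fin (N + 2) → P) :
    cyclicGain v s p =
      (v (p 0, s 0) - v (p (Fin.last (N + 1)), s 0)) -
        (v (p 0, s 1) - v (p (Fin.last (N + 1)), s 1)) +
      cyclicGain v (Fin.tail s) (Fin.tail p) := by
  simp only [cyclicGain_eq_add_sum, Fin.sum_univ_succ, Fin.tail, Fin.succ_last,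
    Fin.succ_zero_eq_one, Fin.castSucc_zero, Fin.succ_castSucc]
  ring

lemma cyclicGain_fin_one (v : P × S → ℝ) (s : Fin 1 → S) (p : Fin 1 → P) :
    cyclicGain v s p = 0 := by
  simp [cyclicGain]

lemma IsCommPath.tail {E : S → P → Prop} {s : Fin (N + 2) → S} {p : Fin (N + 2) → P}
    (h : IsCommPath E s p) : IsCommPath E (Fin.tail s) (Fin.tail p) := by
  obtain ⟨hs, hp, hE, hE'⟩ := h
  exact ⟨hs.comp (Fin.succ_injective _), hp.comp (Fin.succ_injective _),
    fun i => hE i.succ, fun i => hE' i.succ⟩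

theorem SGMonotone.gMonotone {E : S → P → Prop} {v : P × S → ℝ} (hv : SGMonotone E v) :
    GMonotone E v := by
  intro N hN s p h
  change 0 < cyclicGain v s p
  induction N, hN using Nat.le_induction with
  | base =>
    rw [cyclicGain_eq_add_cyclicGain_tail, cyclicGain_fin_one, add_zero]
    exact sub_pos.mpr ((hv 1 le_rfl s p h).2 rfl)
  | succ N _ ih =>
    rw [cyclicGain_eq_add_cyclicGain_tail]
    exact add_pos_of_nonneg_of_pos (sub_nonneg.mpr (hv (N + 1) N.succ_pos s p h).1) (ih _ _ h.tail)

end CyclicGain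

section LyingAversion

variable {S M : Type*} [DecidableEq S] {ψ : M ≃ S} {ℓ : S → ℝ} {s t : S} {m : M}

lemma vLA_of_eq (h : ψ m = s) : vLA ψ ℓ (m, s) = 0 :=
  if_pos h

lemma vLA_of_ne (h : ψ m ≠ s) : vLA ψ ℓ (m, s) = ℓ s :=
  if_neg h

lemma vLA_sub_vLA_symm_lt (hst : s ≠ t) (hm : m ≠ ψ.symm t) (ht : ℓ t < 0)
    (hadd : ℓ t + ℓ (ψ m) < 0) :
    vLA ψ ℓ (m, t) - vLA ψ ℓ (ψ.symm t, t) < vLA ψ ℓ (m, s) - vLA ψ ℓ (ψ.symm t, s) := by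
  have hψt : ψ (ψ.symm t) = t := ψ.apply_symm_apply t
  rw [vLA_of_eq hψt, vLA_of_ne (mt ψ.eq_symm_apply.mpr hm), vLA_of_ne (hψt.trans_ne hst.symm)]
  rcases eq_or_ne (ψ m) s with rfl | hms
  · rw [vLA_of_eq rfl]
    linarith
  · rw [vLA_of_ne hms]
    linarith

end LyingAversion

section SingleDisclosure

variable {S M : Type*} {ψ : M ≃ S} {sbar : S} {mempty : M}

lemma eq_mempty_of_singleDisclosureE_of_ne {s t : S} {m : M} (hst : s ≠ t)
    (hs : singleDisclosureE ψ sbar mempty s m) (ht : singleDisclosureE ψ sbar mempty t m) :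
    m = mempty := by
  rcases hs with hm | ⟨hs, -⟩
  · exact hm
  · exact ht.resolve_right fun ht => hst (hs.trans ht.1.symm)

namespace IsCommPath

lemma apply_castSucc_eq_mempty {N : ℕ} {s : Fin (N + 1) → S} {p : Fin (N + 1) → M}
    (h : IsCommPath (singleDisclosureE ψ sbar mempty) s p) (i : Fin N) :
    p i.castSucc = mempty :=
  eq_mempty_of_singleDisclosureE_of_ne (h.1.ne i.castSucc_lt_succ.ne)
    (h.2.2.1 i.castSucc) (h.2.2.2 i)

lemma length_le_one_of_singleDisclosureE {N : ℕ} {s : Fin (N + 1) → S} {p : Fin (N + 1) → M}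
    (h : IsCommPath (singleDisclosureE ψ sbar mempty) s p) : N ≤ 1 := by
  refine Fin.subsingleton_iff_le_one.mp ⟨fun i j => Fin.castSucc_injective N (h.2.1 ?_)⟩
  rw [h.apply_castSucc_eq_mempty, h.apply_castSucc_eq_mempty]

lemma last_eq_of_singleDisclosureE {s : Fin 2 → S} {p : Fin 2 → M}
    (h : IsCommPath (singleDisclosureE ψ sbar mempty) s p) :
    s 1 = sbar ∧ p 1 = ψ.symm sbar :=
  (h.2.2.1 1).resolve_left fun h1 =>
    h.2.1.ne one_ne_zero (h1.trans (h.apply_castSucc_eq_mempty 0).symm)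

end IsCommPath

end SingleDisclosure

theorem single_disclosure_stabilized_general {S M : Type*} [DecidableEq S]
    (ψ : M ≃ S) (ℓ : S → ℝ) (sbar : S) (mempty : M)
    (hbar : ℓ sbar < 0) (hadd : ℓ sbar + ℓ (ψ mempty) < 0) :
    SGMonotone (singleDisclosureE ψ sbar mempty) (vLA ψ ℓ) ∧
      GMonotone (singleDisclosureE ψ sbar mempty) (vLA ψ ℓ) := by
  have hSGM : SGMonotone (singleDisclosureE ψ sbar mempty) (vLA ψ ℓ) := by
    intro N hN s p h
    obtain rfl : N = 1 := h.length_le_one_of_singleDisclosureE.antisymm hN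
    have hp0 : p 0 = mempty := h.apply_castSucc_eq_mempty 0
    obtain ⟨hs1, hp1⟩ := h.last_eq_of_singleDisclosureE
    have hs : s 0 ≠ sbar := hs1 ▸ h.1.ne zero_ne_one
    have hm : mempty ≠ ψ.symm sbar := hp0 ▸ hp1 ▸ h.2.1.ne zero_ne_one
    have hlt : vLA ψ ℓ (p 0, s 1) - vLA ψ ℓ (p 1, s 1) <
        vLA ψ ℓ (p 0, s 0) - vLA ψ ℓ (p 1, s 0) := by
      rw [hp0, hp1, hs1]
      exact vLA_sub_vLA_symm_lt hs hm hbar hadd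
    exact ⟨hlt.le, fun _ => hlt⟩
  exact ⟨hSGM, hSGM.gMonotone⟩

/-- On a single-disclosure communication graph, the lying-aversion modification satisfies
strong graph-monotonicity; in particular it is G-monotone. -/
theorem single_disclosure_stabilized {S M : Type*} [Fintype S] [Fintype M]
    [DecidableEq S] [Nontrivial S]
    (ψ : M ≃ S) (ℓ : S → ℝ) (hℓ : ∀ s, ℓ s < 0)
    (sbar : S) (mempty : M) (hne : mempty ≠ ψ.symm sbar) :
    SGMonotone (singleDisclosureE ψ sbar mempty) (vLA ψ ℓ) ∧
      GMonotone (singleDisclosureE ψ sbar mempty) (vLA ψ ℓ) :=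
  single_disclosure_stabilized_general ψ ℓ sbar mempty (hℓ sbar) (add_neg (hℓ sbar) (hℓ _))
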